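/- Let (Ω,F,P) be a probability space with expectation E, T > 0, and let u : Ω × [0,T] × D → ℝ³ be jointly measurable with E ∫_0^T ‖u(t)‖²_{L²(D)} dt < ∞, extended by zero outside D. Define Γ^{ij}(t,h) := E ∫_D ψ(x) u^i(t,x) u^j(t,x+h) dx for i,j ∈ {1,2,3}. Then each map h ↦ (1/T)∫_0^T Γ^{ij}(t,h) dt is bounded and continuous on ℝ³. If moreover u(t,·,ω) ∈ H¹_0(D;ℝ³) for a.e. (t,ω) and E ∫_0^T ‖u(t)‖²_{H¹(D)} dt < ∞, then each map h ↦ (1/T)∫_0^T Γ^{ij}(t,h) dt is twice continuously differentiable on ℝ³. (This is Lemma 2.2.) -/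

import Mathlib

open MeasureTheory Metric Real Topology Filter ENNReal

noncomputable section

abbrev V3 : Type := EuclideanSpace ℝ (Fin 3)

/-- The `i`-th partial derivative of a scalar function on `ℝ³`. -/
def pd (i : Fin 3) (f : V3 → ℝ) (x : V3) : ℝ := fderiv ℝ f x (EuclideanSpace.single i 1)

/-- The two-point correlation tensor `Γ^{ij}(t,h) = E ∫_D ψ(x) u^i(t,x) u^j(t,x+h) dx`. -/
def Gam {Ω : Type*} [MeasurableSpace Ω] (μ : Measure Ω) (D : Set V3) (ψ : V3 → ℝ)
    (u : Ω → ℝ → V3 → V3) (i j : Fin 3) (t : ℝ) (h : V3) : ℝ :=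
  ∫ ω, (∫ x in D, ψ x * (u ω t x i * u ω t (x + h) j)) ∂μ

/-!
Averaging over `(ω, t)` turns `Γ` into the correlation of two square-integrable fields `ψ uⁱ` and
`uʲ`. Continuity of translations in `L²` makes every such correlation continuous, and
`2|ab| ≤ a² + b²` bounds it. By Fubini a weak derivative of the second factor passes to the
correlation, and by mollification a continuous function with continuous weak derivatives is `C¹`.
Only first derivatives of `u` are available, so the second derivative in `h` has to fall on the
other factor `ψ uⁱ`: the substitution `h ↦ -h` exchanges the two factors.
-/

open ContinuousLinearMap Module
open Function (uncurry)

section WeakDerivative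

open scoped Convolution ContDiff

variable {E F : Type*} [NormedAddCommGroup E] [NormedSpace ℝ E]
  [NormedAddCommGroup F] [NormedSpace ℝ F]

lemma continuous_fderiv_apply_const {n : WithTop ℕ∞} {f : E → F} (hf : ContDiff ℝ n f)
    (hn : n ≠ 0) (v : E) : Continuous fun x ↦ fderiv ℝ f x v :=
  (hf.continuous_fderiv hn).clm_apply continuous_const

lemma fderiv_comp_const_sub (φ : E → F) (x y : E) :
    fderiv ℝ (fun z ↦ φ (y - z)) x = -fderiv ℝ φ (y - x) := by
  have h := (ContinuousLinearEquiv.neg ℝ).comp_right_fderiv (f := fun z ↦ φ (y + z)) (x := x)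
  rw [fderiv_comp_add_left] at h
  ext v
  simpa [Function.comp_def, sub_eq_add_neg] using DFunLike.congr_fun h v

variable [MeasurableSpace E] {μ : Measure E}

/-- `g` is the weak derivative of `f` in the direction `v`, tested against smooth functions with
compact support. Local integrability of `f` and `g` is not part of the definition; without it the
integrals may take the junk value `0`. -/
def HasWeakLineDeriv (μ : Measure E) (f g : E → F) (v : E) : Prop :=
  ∀ φ : E → ℝ, ContDiff ℝ ∞ φ → HasCompactSupport φ →
    ∫ x, fderiv ℝ φ x v • f x ∂μ = -∫ x, φ x • g x ∂μ

lemma HasWeakLineDeriv.integral_fderiv_sub_smul {f g : E → F} {v : E}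
    (hfg : HasWeakLineDeriv μ f g v) {φ : E → ℝ} (hφ : ContDiff ℝ ∞ φ)
    (hφc : HasCompactSupport φ) (y : E) :
    ∫ x, fderiv ℝ φ (y - x) v • f x ∂μ = ∫ x, φ (y - x) • g x ∂μ := by
  have h := hfg (fun x ↦ φ (y - x)) (by fun_prop)
    (hφc.comp_homeomorph (Homeomorph.subLeft y))
  simpa [fderiv_comp_const_sub, integral_neg] using h

variable [BorelSpace E] [FiniteDimensional ℝ E] [μ.IsAddHaarMeasure]

lemma hasFDerivAt_convolution_of_hasWeakLineDeriv {ι : Type*} (e : Basis ι ℝ E) {f : E → F}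
    {f' : E → E →L[ℝ] F} (hf : LocallyIntegrable f μ) (hf' : LocallyIntegrable f' μ)
    (hw : ∀ i, HasWeakLineDeriv μ f (fun x ↦ f' x (e i)) (e i))
    {ρ : E → ℝ} (hρ : ContDiff ℝ ∞ ρ) (hρc : HasCompactSupport ρ) (y : E) :
    HasFDerivAt (ρ ⋆[lsmul ℝ ℝ, μ] f) ((ρ ⋆[lsmul ℝ ℝ, μ] f') y) y := by
  have hderiv := hρc.hasFDerivAt_convolution_right (lsmul ℝ ℝ).flip hf
    (hρ.of_le (by norm_cast)) y
  rw [convolution_flip] at hderiv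
  convert hderiv using 1
  refine ContinuousLinearMap.coe_injective (e.ext fun i ↦ ?_)
  have hint := (hρc.convolutionExists_right (lsmul ℝ ℝ).flip hf' hρ.continuous y).integrable
  rw [← convolution_flip]
  simp only [coe_coe]
  rw [convolution_precompR_apply _ hf (hρc.fderiv ℝ)
    (hρ.continuous_fderiv (by simp))]
  simp only [convolution_def, flip_apply, lsmul_apply] at hint ⊢
  rw [integral_apply hint]
  simp only [smul_apply]
  exact ((hw i).integral_fderiv_sub_smul hρ hρc y).symm

variable [CompleteSpace F]

lemma tendsto_contDiffBump_convolution {ι : Type*} {l : Filter ι} {B : ι → ContDiffBump (0 : E)}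
    (hB : Tendsto (fun i ↦ (B i).rOut) l (𝓝 0)) {g : E → F} (hg : Continuous g) (x : E) :
    Tendsto (fun p : ι × E ↦ ((B p.1).normed μ ⋆[lsmul ℝ ℝ, μ] g) p.2) (l ×ˢ 𝓝 x) (𝓝 (g x)) :=
  ContDiffBump.convolution_tendsto_right (hB.comp tendsto_fst)
    (.of_forall fun _ ↦ hg.aestronglyMeasurable) ((hg.tendsto x).comp tendsto_snd) tendsto_snd

theorem hasFDerivAt_of_hasWeakLineDeriv {ι : Type*} (e : Basis ι ℝ E) {f : E → F}
    {f' : E → E →L[ℝ] F} (hf : Continuous f) (hf' : Continuous f')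
    (hw : ∀ i, HasWeakLineDeriv μ f (fun x ↦ f' x (e i)) (e i)) (x : E) :
    HasFDerivAt f (f' x) x := by
  let B (n : ℕ) : ContDiffBump (0 : E) := ⟨1 / (n + 1) / 2, 1 / (n + 1), by positivity,
    half_lt_self (by positivity)⟩
  have hB : Tendsto (fun n ↦ (B n).rOut) atTop (𝓝 0) := tendsto_one_div_add_atTop_nhds_zero_nat
  refine hasFDerivAt_of_tendstoUniformlyOnFilter (l := atTop)
    (f := fun n ↦ (B n).normed μ ⋆[lsmul ℝ ℝ, μ] f)
    (f' := fun n ↦ (B n).normed μ ⋆[lsmul ℝ ℝ, μ] f') ?_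
    (.of_forall fun p ↦ hasFDerivAt_convolution_of_hasWeakLineDeriv e hf.locallyIntegrable
      hf'.locallyIntegrable hw (B p.1).contDiff_normed (B p.1).hasCompactSupport_normed p.2)
    (.of_forall fun y ↦ ContDiffBump.convolution_tendsto_right_of_continuous hB hf y)
  rw [tendstoUniformlyOnFilter_iff_tendsto]
  exact (((hf'.tendsto x).comp tendsto_snd).prodMk_nhds
    (tendsto_contDiffBump_convolution hB hf' x)).mono_right (nhds_le_uniformity _)

theorem contDiff_succ_of_hasWeakLineDeriv {ι : Type*} (e : Basis ι ℝ E) {n : ℕ}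
    {f : E → F} {f' : ι → E → F} (hf : Continuous f) (hf' : ∀ i, ContDiff ℝ n (f' i))
    (hw : ∀ i, HasWeakLineDeriv μ f (f' i) (e i)) : ContDiff ℝ (n + 1) f := by
  have := Module.Finite.finite_basis e
  have hDf : ContDiff ℝ n fun x ↦ e.constrL fun i ↦ f' i x := by
    have := Fintype.ofFinite ι
    refine contDiff_clm_apply_iff.2 fun v ↦ ?_
    simp only [Basis.constrL_apply]
    fun_prop
  refine contDiff_succ_iff_hasFDerivAt.2 ⟨_, hDf, fun x ↦
    hasFDerivAt_of_hasWeakLineDeriv (μ := μ) e hf hDf.continuous (fun i ↦ ?_) x⟩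
  simpa only [Basis.constrL_basis] using hw i

end WeakDerivative

section SquareIntegrable

variable {α β : Type*} [MeasurableSpace α] [MeasurableSpace β]

lemma integral_abs_mul_comp_le {μ : Measure α} {ν : Measure β} {f : α → ℝ} {g : β → ℝ}
    (hf : MemLp f 2 μ) (hg : MemLp g 2 ν) {τ : α → β} (hτ : MeasurePreserving τ μ ν) :
    ∫ x, |f x * g (τ x)| ∂μ ≤ ∫ x, f x ^ 2 ∂μ + ∫ y, g y ^ 2 ∂ν := by
  have hgτ : MemLp (fun x ↦ g (τ x)) 2 μ := hg.comp_measurePreserving hτ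
  have hτg : ∫ y, g y ^ 2 ∂ν = ∫ x, g (τ x) ^ 2 ∂μ := by
    rw [← hτ.map_eq]
    exact integral_map hτ.aemeasurable (hτ.map_eq ▸ hg.integrable_sq.aestronglyMeasurable)
  rw [hτg, ← integral_add hf.integrable_sq hgτ.integrable_sq]
  refine integral_mono (hf.integrable_mul hgτ).abs (hf.integrable_sq.add hgτ.integrable_sq)
    fun x ↦ ?_
  have h := two_mul_le_add_sq |f x| |g (τ x)|
  have hnn : 0 ≤ |f x| * |g (τ x)| := by positivity
  rw [sq_abs, sq_abs] at h
  rw [abs_mul]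
  linarith

lemma ae_memLp_two_prodMk_left {μ : Measure α} {ν : Measure β} [SFinite μ] [SFinite ν]
    {f : α × β → ℝ} (hf : MemLp f 2 (μ.prod ν)) : ∀ᵐ x ∂μ, MemLp (fun y ↦ f (x, y)) 2 ν := by
  filter_upwards [hf.integrable_sq.prod_right_ae, hf.1.prodMk_left] with x hx hxm
  exact (memLp_two_iff_integrable_sq hxm).2 hx

lemma memLp_mul_comp_snd {μ : Measure α} {ν : Measure β} {p : ℝ≥0∞} {f : α × β → ℝ}
    {g : β → ℝ} {C : ℝ} (hg : AEStronglyMeasurable g ν) (hC : ∀ y, ‖g y‖ ≤ C)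
    (hf : MemLp f p (μ.prod ν)) : MemLp (fun z ↦ g z.2 * f z) p (μ.prod ν) :=
  hf.mul' (memLp_top_of_bound hg.comp_snd C (ae_of_all _ fun z ↦ hC z.2))

end SquareIntegrable

section Correlation

variable {Q G : Type*} [MeasurableSpace Q] [AddCommGroup G] [MeasurableSpace G]

/-- The correlation, as a function of the displacement `h`, of two random fields on `G` with
parameter space `Q`. -/
def correlation (ν : Measure Q) (μ : Measure G) (a b : Q × G → ℝ) (h : G) : ℝ :=
  ∫ p, a p * b (p.1, p.2 + h) ∂ν.prod μ

variable {ν : Measure Q} {μ : Measure G} [SFinite ν] [SFinite μ] {a b : Q × G → ℝ}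

section Measurable

variable [MeasurableAdd G] [μ.IsAddRightInvariant]

variable (ν μ) in
lemma measurePreserving_add_right_snd (h : G) :
    MeasurePreserving (fun p : Q × G ↦ (p.1, p.2 + h)) (ν.prod μ) (ν.prod μ) :=
  (MeasurePreserving.id ν).prod (measurePreserving_add_right μ h)

lemma integrable_correlation (ha : MemLp a 2 (ν.prod μ)) (hb : MemLp b 2 (ν.prod μ)) (h : G) :
    Integrable (fun p : Q × G ↦ a p * b (p.1, p.2 + h)) (ν.prod μ) :=
  ha.integrable_mul (hb.comp_measurePreserving (measurePreserving_add_right_snd ν μ h))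

lemma abs_correlation_le (ha : MemLp a 2 (ν.prod μ)) (hb : MemLp b 2 (ν.prod μ)) (h : G) :
    |correlation ν μ a b h| ≤ ∫ p, a p ^ 2 ∂ν.prod μ + ∫ p, b p ^ 2 ∂ν.prod μ :=
  abs_integral_le_integral_abs.trans
    (integral_abs_mul_comp_le ha hb (measurePreserving_add_right_snd ν μ h))

lemma correlation_neg (a b : Q × G → ℝ) (h : G) :
    correlation ν μ a b (-h) = correlation ν μ b a h := by
  have hemb : MeasurableEmbedding fun p : Q × G ↦ (p.1, p.2 + h) :=
    MeasurableEmbedding.id.prodMap (measurableEmbedding_addRight h)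
  simp only [correlation]
  rw [← (measurePreserving_add_right_snd ν μ h).integral_comp hemb]
  simp only [add_neg_cancel_right, mul_comm]

end Measurable

section Fubini

variable [MeasurableAdd₂ G] [μ.IsAddRightInvariant]

lemma aestronglyMeasurable_correlation_mul (ha : AEStronglyMeasurable a (ν.prod μ))
    (hb : AEStronglyMeasurable b (ν.prod μ)) {g : G → ℝ} (hg : AEStronglyMeasurable g μ) :
    AEStronglyMeasurable (fun z : (Q × G) × G ↦ a z.1 * b (z.1.1, z.1.2 + z.2) * g z.2)
      ((ν.prod μ).prod μ) := by
  have hshift : Measure.QuasiMeasurePreserving (fun z : (Q × G) × G ↦ (z.1.1, z.1.2 + z.2))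
      ((ν.prod μ).prod μ) (ν.prod μ) :=
    MeasureTheory.QuasiMeasurePreserving.prod_of_left (by fun_prop) (ae_of_all _ fun h ↦
      (measurePreserving_add_right_snd ν μ h).quasiMeasurePreserving)
  exact (ha.comp_fst.mul (hb.comp_quasiMeasurePreserving hshift)).mul hg.comp_snd

lemma integrable_correlation_mul (ha : MemLp a 2 (ν.prod μ)) (hb : MemLp b 2 (ν.prod μ))
    {g : G → ℝ} (hg : Integrable g μ) :
    Integrable (fun z : (Q × G) × G ↦ a z.1 * b (z.1.1, z.1.2 + z.2) * g z.2)
      ((ν.prod μ).prod μ) := by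
  have hmeas := aestronglyMeasurable_correlation_mul ha.1 hb.1 hg.1
  refine (integrable_prod_iff' hmeas).2
    ⟨ae_of_all _ fun h ↦ (integrable_correlation ha hb h).mul_const (g h), ?_⟩
  refine (hg.norm.const_mul (∫ p, a p ^ 2 ∂ν.prod μ + ∫ p, b p ^ 2 ∂ν.prod μ)).mono'
    hmeas.norm.prod_swap.integral_prod_right' (ae_of_all _ fun h ↦ ?_)
  rw [norm_of_nonneg (by positivity)]
  simp only [norm_mul _ (g h), integral_mul_const]
  gcongr
  exact integral_abs_mul_comp_le ha hb (measurePreserving_add_right_snd ν μ h)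

lemma integral_correlation_mul (ha : MemLp a 2 (ν.prod μ)) (hb : MemLp b 2 (ν.prod μ))
    {g : G → ℝ} (hg : Integrable g μ) :
    ∫ h, correlation ν μ a b h * g h ∂μ =
      ∫ x, ∫ q, a (q, x) * ∫ h, b (q, x + h) * g h ∂μ ∂ν ∂μ := by
  have hint := integrable_correlation_mul ha hb hg
  simp only [correlation, ← integral_mul_const, ← integral_const_mul, ← mul_assoc]
  rw [← integral_integral_swap (f := fun p h ↦ a p * b (p.1, p.2 + h) * g h) hint]
  exact integral_prod_symm _ hint.integral_prod_left

end Fubini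

section Continuity

variable [TopologicalSpace G] [IsTopologicalAddGroup G] [BorelSpace G]
  [IsLocallyFiniteMeasure μ] [μ.InnerRegularCompactLTTop] [μ.IsAddLeftInvariant]

omit [SFinite μ] in
lemma continuous_integral_mul_comp_add {f g : G → ℝ} (hf : MemLp f 2 μ) (hg : MemLp g 2 μ) :
    Continuous fun h ↦ ∫ x, f x * g (x + h) ∂μ := by
  have hinner (h : G) : ∫ x, f x * g (x + h) ∂μ =
      inner ℝ (hf.toLp f) (DomAddAct.mk h +ᵥ hg.toLp g) := by
    have hgh : MemLp (fun x ↦ g (x + h)) 2 μ :=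
      hg.comp_measurePreserving (measurePreserving_add_right μ h)
    have hshift : DomAddAct.mk h +ᵥ hg.toLp g = hgh.toLp _ := by
      rw [DomAddAct.mk_vadd_toLp]
      exact MemLp.toLp_congr _ _ (ae_of_all _ fun x ↦ by simp [add_comm])
    rw [hshift, L2.inner_def]
    refine integral_congr_ae ?_
    filter_upwards [hf.coeFn_toLp, hgh.coeFn_toLp] with x hfx hghx
    simp [hfx, hghx, mul_comm]
  simp_rw [hinner]
  have : Fact ((2 : ℝ≥0∞) ≠ ⊤) := ⟨by simp⟩
  exact continuous_const.inner (DomAddAct.continuous_mk.vadd continuous_const)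

theorem continuous_correlation [FirstCountableTopology G] (ha : MemLp a 2 (ν.prod μ))
    (hb : MemLp b 2 (ν.prod μ)) :
    Continuous (correlation ν μ a b) := by
  have hfiber : correlation ν μ a b = fun h ↦ ∫ q, ∫ x, a (q, x) * b (q, x + h) ∂μ ∂ν :=
    funext fun h ↦ integral_prod _ (integrable_correlation ha hb h)
  rw [hfiber]
  refine continuous_of_dominated
    (bound := fun q ↦ ∫ x, a (q, x) ^ 2 ∂μ + ∫ x, b (q, x) ^ 2 ∂μ) (fun h ↦ ?_) (fun h ↦ ?_)
    (ha.integrable_sq.integral_prod_left.add hb.integrable_sq.integral_prod_left) ?_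
  · exact (integrable_correlation ha hb h).aestronglyMeasurable.integral_prod_right'
  · filter_upwards [ae_memLp_two_prodMk_left ha, ae_memLp_two_prodMk_left hb] with q haq hbq
    exact abs_integral_le_integral_abs.trans
      (integral_abs_mul_comp_le haq hbq (measurePreserving_add_right μ h))
  · filter_upwards [ae_memLp_two_prodMk_left ha, ae_memLp_two_prodMk_left hb] with q haq hbq
    exact continuous_integral_mul_comp_add haq hbq

end Continuity

end Correlation

section WeakDerivativeOfCorrelation

open scoped ContDiff

variable {Q E : Type*} [MeasurableSpace Q] [NormedAddCommGroup E] [NormedSpace ℝ E]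
  [MeasurableSpace E] {ν : Measure Q} {μ : Measure E} {a a' b b' : Q × E → ℝ} {v : E}

/-- `b' (q, ·)` is the weak derivative of `b (q, ·)` in the direction `v` for almost every `q`,
where the exceptional null set is allowed to depend on the test function. -/
def AEHasWeakLineDeriv (ν : Measure Q) (μ : Measure E) (b b' : Q × E → ℝ) (v : E) : Prop :=
  ∀ φ : E → ℝ, ContDiff ℝ ∞ φ → HasCompactSupport φ →
    ∀ᵐ q ∂ν, ∫ x, fderiv ℝ φ x v * b (q, x) ∂μ = -∫ x, φ x * b' (q, x) ∂μ

section ProductRule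

variable [OpensMeasurableSpace E]

lemma integral_fderiv_mul_mul_of_mul {f g ψ φ : E → ℝ} (hf : LocallyIntegrable f μ)
    (hg : LocallyIntegrable g μ) (hψ : ContDiff ℝ ∞ ψ) (hφ : ContDiff ℝ ∞ φ)
    (hφc : HasCompactSupport φ)
    (hw : ∫ x, fderiv ℝ (fun y ↦ ψ y * φ y) x v * f x ∂μ = -∫ x, ψ x * φ x * g x ∂μ) :
    ∫ x, fderiv ℝ φ x v * (ψ x * f x) ∂μ =
      -∫ x, φ x * (ψ x * g x + fderiv ℝ ψ x v * f x) ∂μ := by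
  have hψg : Integrable (fun x ↦ ψ x * φ x * g x) μ :=
    hg.integrable_smul_left_of_hasCompactSupport (hψ.continuous.mul hφ.continuous) hφc.mul_left
  have hψ'f : Integrable (fun x ↦ φ x * fderiv ℝ ψ x v * f x) μ :=
    hf.integrable_smul_left_of_hasCompactSupport
      (hφ.continuous.mul (continuous_fderiv_apply_const hψ (by simp) v)) hφc.mul_right
  have hφ'f : Integrable (fun x ↦ ψ x * fderiv ℝ φ x v * f x) μ :=
    hf.integrable_smul_left_of_hasCompactSupport
      (hψ.continuous.mul (continuous_fderiv_apply_const hφ (by simp) v))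
      (hφc.fderiv_apply ℝ v).mul_left
  have hleibniz (x : E) : fderiv ℝ (fun y ↦ ψ y * φ y) x v * f x =
      ψ x * fderiv ℝ φ x v * f x + φ x * fderiv ℝ ψ x v * f x := by
    rw [fderiv_fun_mul (hψ.differentiable (by simp) x) (hφ.differentiable (by simp) x)]
    simp [add_mul]
  simp only [hleibniz] at hw
  rw [integral_add hφ'f hψ'f] at hw
  have hsum : ∫ x, φ x * (ψ x * g x + fderiv ℝ ψ x v * f x) ∂μ =
      ∫ x, ψ x * φ x * g x ∂μ + ∫ x, φ x * fderiv ℝ ψ x v * f x ∂μ := by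
    rw [← integral_add hψg hψ'f]
    congr with x
    ring
  have hcomm : ∫ x, fderiv ℝ φ x v * (ψ x * f x) ∂μ = ∫ x, ψ x * fderiv ℝ φ x v * f x ∂μ := by
    congr with x
    ring
  linarith

lemma AEHasWeakLineDeriv.smooth_mul [SFinite ν] [SFinite μ] [IsFiniteMeasureOnCompacts μ]
    [LocallyCompactSpace E] (hw : AEHasWeakLineDeriv ν μ b b' v)
    (hb : MemLp b 2 (ν.prod μ)) (hb' : MemLp b' 2 (ν.prod μ)) {ψ : E → ℝ} (hψ : ContDiff ℝ ∞ ψ) :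
    AEHasWeakLineDeriv ν μ (fun p ↦ ψ p.2 * b p)
      (fun p ↦ ψ p.2 * b' p + fderiv ℝ ψ p.2 v * b p) v := by
  intro φ hφ hφc
  filter_upwards [hw _ (hψ.mul hφ) hφc.mul_left, ae_memLp_two_prodMk_left hb,
    ae_memLp_two_prodMk_left hb'] with q hwq hbq hbq'
  exact integral_fderiv_mul_mul_of_mul (hbq.locallyIntegrable one_le_two)
    (hbq'.locallyIntegrable one_le_two) hψ hφ hφc hwq

end ProductRule

variable [BorelSpace E]

lemma AEHasWeakLineDeriv.ae_integral_comp_add [μ.IsAddLeftInvariant]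
    (hw : AEHasWeakLineDeriv ν μ b b' v) {φ : E → ℝ} (hφ : ContDiff ℝ ∞ φ)
    (hφc : HasCompactSupport φ) (x : E) :
    ∀ᵐ q ∂ν, ∫ h, b (q, x + h) * fderiv ℝ φ h v ∂μ = -∫ h, b' (q, x + h) * φ h ∂μ := by
  filter_upwards [hw (fun y ↦ φ (y - x)) (by fun_prop)
    (hφc.comp_homeomorph (Homeomorph.subRight x))] with q hq
  rw [← integral_add_left_eq_self _ x, ← integral_add_left_eq_self (fun y ↦ _ * b' (q, y)) x] at hq
  simpa [fderiv_comp_sub, mul_comm] using hq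

variable [FiniteDimensional ℝ E] [SFinite ν] [μ.IsAddHaarMeasure]

theorem AEHasWeakLineDeriv.hasWeakLineDeriv_correlation (hw : AEHasWeakLineDeriv ν μ b b' v)
    (ha : MemLp a 2 (ν.prod μ)) (hb : MemLp b 2 (ν.prod μ)) (hb' : MemLp b' 2 (ν.prod μ)) :
    HasWeakLineDeriv μ (correlation ν μ a b) (correlation ν μ a b') v := by
  intro φ hφ hφc
  have hint : Integrable φ μ := hφ.continuous.integrable_of_hasCompactSupport hφc
  have hint' : Integrable (fun x ↦ fderiv ℝ φ x v) μ :=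
    (continuous_fderiv_apply_const hφ (by simp) v).integrable_of_hasCompactSupport
      (hφc.fderiv_apply ℝ v)
  simp only [smul_eq_mul, mul_comm _ (correlation _ _ _ _ _), ← integral_neg,
    integral_correlation_mul ha hb hint', integral_correlation_mul ha hb' hint]
  congr with x
  refine integral_congr_ae ?_
  filter_upwards [hw.ae_integral_comp_add hφ hφc x] with q hq
  rw [hq, mul_neg]

variable {ι : Type*} (e : Basis ι ℝ E)

theorem contDiff_two_correlation {a' b' : ι → Q × E → ℝ} (ha : MemLp a 2 (ν.prod μ))
    (ha' : ∀ i, MemLp (a' i) 2 (ν.prod μ)) (hb : MemLp b 2 (ν.prod μ))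
    (hb' : ∀ i, MemLp (b' i) 2 (ν.prod μ)) (hwa : ∀ i, AEHasWeakLineDeriv ν μ a (a' i) (e i))
    (hwb : ∀ i, AEHasWeakLineDeriv ν μ b (b' i) (e i)) :
    ContDiff ℝ 2 (correlation ν μ a b) := by
  have hone (i : ι) : ContDiff ℝ 1 (correlation ν μ (b' i) a) := by
    simpa using contDiff_succ_of_hasWeakLineDeriv (n := 0) e (continuous_correlation (hb' i) ha)
      (fun k ↦ contDiff_zero.2 (continuous_correlation (hb' i) (ha' k)))
      (fun k ↦ (hwa k).hasWeakLineDeriv_correlation (hb' i) ha (ha' k))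
  refine contDiff_succ_of_hasWeakLineDeriv (n := 1) e (continuous_correlation ha hb) (fun i ↦ ?_)
    (fun i ↦ (hwb i).hasWeakLineDeriv_correlation ha hb (hb' i))
  simpa only [Function.comp_def, correlation_neg, Nat.cast_one] using (hone i).comp contDiff_neg

theorem contDiff_two_correlation_smooth_mul {a' b' : ι → Q × E → ℝ} {ψ : E → ℝ} {C C' : ℝ}
    (hψ : ContDiff ℝ ∞ ψ) (hC : ∀ x, ‖ψ x‖ ≤ C) (hC' : ∀ x, ‖fderiv ℝ ψ x‖ ≤ C')
    (ha : MemLp a 2 (ν.prod μ)) (ha' : ∀ i, MemLp (a' i) 2 (ν.prod μ)) (hb : MemLp b 2 (ν.prod μ))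
    (hb' : ∀ i, MemLp (b' i) 2 (ν.prod μ)) (hwa : ∀ i, AEHasWeakLineDeriv ν μ a (a' i) (e i))
    (hwb : ∀ i, AEHasWeakLineDeriv ν μ b (b' i) (e i)) :
    ContDiff ℝ 2 (correlation ν μ (fun p ↦ ψ p.2 * a p) b) := by
  have hψm : AEStronglyMeasurable ψ μ := hψ.continuous.aestronglyMeasurable
  have hψ'm (i : ι) : AEStronglyMeasurable (fun x ↦ fderiv ℝ ψ x (e i)) μ :=
    (continuous_fderiv_apply_const hψ (by simp) (e i)).aestronglyMeasurable
  refine contDiff_two_correlation e (memLp_mul_comp_snd hψm hC ha) (fun i ↦ ?_) hb hb'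
    (fun i ↦ (hwa i).smooth_mul ha (ha' i) hψ) hwb
  exact (memLp_mul_comp_snd hψm hC (ha' i)).add
    (memLp_mul_comp_snd (hψ'm i) (fun x ↦ le_of_opNorm_le _ (hC' x) (e i)) ha)

end WeakDerivativeOfCorrelation

section IteratedIntegral

open scoped ContDiff

variable {α β γ : Type*} [MeasurableSpace α] [MeasurableSpace β] [MeasurableSpace γ]

lemma measurable_uncurry_uncurry {δ : Type*} [MeasurableSpace δ] {w : α → β → γ → δ}
    (hw : Measurable fun q : α × β × γ ↦ w q.1 q.2.1 q.2.2) : Measurable (uncurry (uncurry w)) :=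
  hw.comp MeasurableEquiv.prodAssoc.measurable

lemma memLp_two_uncurry_uncurry {F : Type*} [NormedAddCommGroup F] {μ : Measure α} {ν : Measure β}
    {ρ : Measure γ} [SFinite ν] [SFinite ρ] {w : α → β → γ → F}
    (hw : AEStronglyMeasurable (uncurry (uncurry w)) ((μ.prod ν).prod ρ))
    (hfin : ∫⁻ a, ∫⁻ b, ∫⁻ c, ‖w a b c‖ₑ ^ 2 ∂ρ ∂ν ∂μ < ⊤) :
    MemLp (uncurry (uncurry w)) 2 ((μ.prod ν).prod ρ) := by
  refine ⟨hw, (eLpNorm_lt_top_iff_lintegral_rpow_enorm_lt_top two_ne_zero ofNat_ne_top).2 ?_⟩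
  have hmeas := hw.enorm.pow_const (ENNReal.toReal 2)
  rw [lintegral_prod _ hmeas, lintegral_prod _ hmeas.lintegral_prod_right']
  simpa using hfin

lemma AEHasWeakLineDeriv.of_ae_ae [NormedAddCommGroup γ] [NormedSpace ℝ γ] [BorelSpace γ]
    {μ : Measure α} {ν : Measure β} {ρ : Measure γ} [SFinite ν] [SFinite ρ]
    {f g : α → β → γ → ℝ} {v : γ} (hf : Measurable (uncurry (uncurry f)))
    (hg : Measurable (uncurry (uncurry g)))
    (h : ∀ φ : γ → ℝ, ContDiff ℝ ∞ φ → HasCompactSupport φ → ∀ᵐ a ∂μ, ∀ᵐ b ∂ν,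
      ∫ x, f a b x * fderiv ℝ φ x v ∂ρ = -∫ x, g a b x * φ x ∂ρ) :
    AEHasWeakLineDeriv (μ.prod ν) ρ (uncurry (uncurry f)) (uncurry (uncurry g)) v := by
  intro φ hφ hφc
  have hφ'm := (continuous_fderiv_apply_const hφ (by simp) v).measurable
  have hlhs : Measurable fun q : α × β ↦ ∫ x, fderiv ℝ φ x v * uncurry (uncurry f) (q, x) ∂ρ :=
    ((hφ'm.comp measurable_snd).mul hf).stronglyMeasurable.integral_prod_right'.measurable
  have hrhs : Measurable fun q : α × β ↦ -∫ x, φ x * uncurry (uncurry g) (q, x) ∂ρ :=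
    ((hφ.continuous.measurable.comp
      measurable_snd).mul hg).stronglyMeasurable.integral_prod_right'.measurable.neg
  rw [Measure.ae_prod_iff_ae_ae (measurableSet_eq_fun hlhs hrhs)]
  simpa only [mul_comm, uncurry] using h φ hφ hφc

end IteratedIntegral

section CorrelationTensor

variable {Ω : Type*} [MeasurableSpace Ω] {μ : Measure Ω} {D : Set V3} {ψ : V3 → ℝ}
  {T : ℝ} {u : Ω → ℝ → V3 → V3}

/-- The product of `μ` with Lebesgue measure on the time interval `(0, T]`; not normalised. -/
abbrev timeMeasure (μ : Measure Ω) (T : ℝ) : Measure (Ω × ℝ) :=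
  μ.prod (volume.restrict (Set.Ioc 0 T))

lemma memLp_two_velocity (humeas : Measurable (uncurry (uncurry u)))
    (huD : ∀ ω t x, x ∉ D → u ω t x = 0)
    (huL2 : (∫⁻ ω, (∫⁻ t in Set.Ioc 0 T, ∫⁻ x in D, (‖u ω t x‖₊ : ℝ≥0∞) ^ 2) ∂μ) < ⊤) :
    MemLp (uncurry (uncurry u)) 2 ((timeMeasure μ T).prod volume) := by
  refine memLp_two_uncurry_uncurry humeas.aestronglyMeasurable ?_
  have hsupp (ω : Ω) (t : ℝ) : (fun x ↦ ‖u ω t x‖ₑ ^ 2).support ⊆ D := fun x hx ↦ by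
    contrapose! hx
    simp [huD ω t x hx]
  simp only [← setLIntegral_eq_of_support_subset (μ := volume) (hsupp _ _)]
  exact huL2

lemma memLp_two_gradient {Du : Ω → ℝ → V3 → Fin 3 → Fin 3 → ℝ}
    (hDum : Measurable (uncurry (uncurry Du)))
    (hDuL2 : (∫⁻ ω, (∫⁻ t in Set.Ioc 0 T, ∫⁻ x : V3, ((‖u ω t x‖₊ : ℝ≥0∞) ^ 2 +
      ∑ i : Fin 3, ∑ j : Fin 3, (‖Du ω t x i j‖₊ : ℝ≥0∞) ^ 2)) ∂μ) < ⊤) (i j : Fin 3) :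
    MemLp (fun p ↦ uncurry (uncurry Du) p i j) 2 ((timeMeasure μ T).prod volume) := by
  refine memLp_two_uncurry_uncurry (w := fun ω t x ↦ Du ω t x i j)
    ((hDum.eval (a := i)).eval (a := j)).aestronglyMeasurable (lt_of_le_of_lt ?_ hDuL2)
  gcongr with ω t x
  calc ‖Du ω t x i j‖ₑ ^ 2
      ≤ ∑ j, ‖Du ω t x i j‖ₑ ^ 2 :=
        Finset.single_le_sum (f := fun j ↦ ‖Du ω t x i j‖ₑ ^ 2) (by simp) (Finset.mem_univ j)
    _ ≤ ∑ i, ∑ j, ‖Du ω t x i j‖ₑ ^ 2 :=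
        Finset.single_le_sum (f := fun i ↦ ∑ j, ‖Du ω t x i j‖ₑ ^ 2) (by simp) (Finset.mem_univ i)
    _ ≤ ‖u ω t x‖ₑ ^ 2 + ∑ i, ∑ j, ‖Du ω t x i j‖ₑ ^ 2 := le_add_self

lemma aeHasWeakLineDeriv_velocity {Du : Ω → ℝ → V3 → Fin 3 → Fin 3 → ℝ}
    (humeas : Measurable (uncurry (uncurry u))) (hDum : Measurable (uncurry (uncurry Du)))
    (hweak : ∀ᵐ ω ∂μ, ∀ᵐ t ∂(volume.restrict (Set.Ioc 0 T)), ∀ φ : V3 → ℝ,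
      ContDiff ℝ (⊤ : ℕ∞) φ → HasCompactSupport φ → ∀ i j : Fin 3,
        ∫ x : V3, u ω t x j * pd i φ x = -∫ x : V3, Du ω t x i j * φ x) (i j : Fin 3) :
    AEHasWeakLineDeriv (timeMeasure μ T) volume (fun p ↦ uncurry (uncurry u) p j)
      (fun p ↦ uncurry (uncurry Du) p i j) ((EuclideanSpace.basisFun (Fin 3) ℝ).toBasis i) := by
  refine AEHasWeakLineDeriv.of_ae_ae (f := fun ω t x ↦ u ω t x j) (g := fun ω t x ↦ Du ω t x i j)
    ((EuclideanSpace.proj j).continuous.measurable.comp humeas)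
    ((hDum.eval (a := i)).eval (a := j)) fun φ hφ hφc ↦ ?_
  filter_upwards [hweak] with ω hω
  filter_upwards [hω] with t ht
  simpa [pd] using ht φ hφ hφc i j

variable [SFinite μ]

lemma intervalIntegral_Gam_eq_correlation (hT : 0 ≤ T) (huD : ∀ ω t x, x ∉ D → u ω t x = 0)
    {i j : Fin 3}
    (hψu : MemLp (fun p ↦ ψ p.2 * uncurry (uncurry u) p i) 2 ((timeMeasure μ T).prod volume))
    (hu : MemLp (fun p ↦ uncurry (uncurry u) p j) 2 ((timeMeasure μ T).prod volume)) (h : V3) :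
    ∫ t in (0 : ℝ)..T, Gam μ D ψ u i j t h = correlation (timeMeasure μ T) volume
      (fun p ↦ ψ p.2 * uncurry (uncurry u) p i) (fun p ↦ uncurry (uncurry u) p j) h := by
  have hint := integrable_correlation hψu hu h
  rw [correlation, integral_prod _ hint, integral_prod_symm _ hint.integral_prod_left,
    intervalIntegral.integral_of_le hT]
  congr with t
  refine integral_congr_ae (ae_of_all _ fun ω ↦ ?_)
  simp only [← mul_assoc, uncurry]
  exact setIntegral_eq_integral_of_forall_compl_eq_zero fun x hx ↦ by simp [huD ω t x hx]

end CorrelationTensor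

theorem correlation_tensor_regularity_general
    (D : Set V3) (ψ : V3 → ℝ) (hψ : ContDiff ℝ (⊤ : ℕ∞) ψ) {C C' : ℝ} (hC : ∀ x, ‖ψ x‖ ≤ C)
    (hC' : ∀ x, ‖fderiv ℝ ψ x‖ ≤ C') {Ω : Type*} [MeasurableSpace Ω] (μ : Measure Ω) [SFinite μ]
    (T : ℝ) (hT : 0 < T)
    (u : Ω → ℝ → V3 → V3)
    (humeas : Measurable (fun q : Ω × ℝ × V3 => u q.1 q.2.1 q.2.2))
    (huD : ∀ ω t x, x ∉ D → u ω t x = 0)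
    (huL2 : (∫⁻ ω, (∫⁻ t in Set.Ioc 0 T, ∫⁻ x in D, (‖u ω t x‖₊ : ℝ≥0∞) ^ 2) ∂μ) < ⊤) :
    (∀ i j : Fin 3,
      Continuous (fun h : V3 => (1 / T) * ∫ t in (0 : ℝ)..T, Gam μ D ψ u i j t h) ∧
      ∃ M : ℝ, ∀ h : V3, |(1 / T) * ∫ t in (0 : ℝ)..T, Gam μ D ψ u i j t h| ≤ M) ∧
    ((∃ Du : Ω → ℝ → V3 → Fin 3 → Fin 3 → ℝ,
        Measurable (fun q : Ω × ℝ × V3 => Du q.1 q.2.1 q.2.2) ∧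
        (∀ᵐ ω ∂μ, ∀ᵐ t ∂(volume.restrict (Set.Ioc 0 T)),
          ∀ φ : V3 → ℝ, ContDiff ℝ (⊤ : ℕ∞) φ → HasCompactSupport φ → ∀ i j : Fin 3,
            ∫ x : V3, u ω t x j * pd i φ x = -∫ x : V3, Du ω t x i j * φ x) ∧
        (∫⁻ ω, (∫⁻ t in Set.Ioc 0 T, ∫⁻ x : V3,
            ((‖u ω t x‖₊ : ℝ≥0∞) ^ 2 +
              ∑ i : Fin 3, ∑ j : Fin 3, (‖Du ω t x i j‖₊ : ℝ≥0∞) ^ 2)) ∂μ) < ⊤) →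
      ∀ i j : Fin 3,
        ContDiff ℝ 2 (fun h : V3 => (1 / T) * ∫ t in (0 : ℝ)..T, Gam μ D ψ u i j t h)) := by
  have hU := memLp_two_velocity (measurable_uncurry_uncurry humeas) huD huL2
  have hψU (i : Fin 3) := memLp_mul_comp_snd hψ.continuous.aestronglyMeasurable hC (hU.eval_piLp i)
  have hΓ (i j : Fin 3) := intervalIntegral_Gam_eq_correlation hT.le huD (hψU i) (hU.eval_piLp j)
  simp only [hΓ]
  refine ⟨fun i j ↦ ⟨continuous_const.mul (continuous_correlation (hψU i) (hU.eval_piLp j)), _,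
    fun h ↦ (abs_mul _ _).trans_le (mul_le_mul_of_nonneg_left
      (abs_correlation_le (hψU i) (hU.eval_piLp j) h) (abs_nonneg _))⟩, ?_⟩
  rintro ⟨Du, hDum, hweak, hDuL2⟩ i j
  have hDu := memLp_two_gradient (measurable_uncurry_uncurry hDum) hDuL2
  have hw := aeHasWeakLineDeriv_velocity (measurable_uncurry_uncurry humeas)
    (measurable_uncurry_uncurry hDum) hweak
  exact contDiff_const.mul (contDiff_two_correlation_smooth_mul _ hψ hC hC' (hU.eval_piLp i)
    (fun k ↦ hDu k i) (hU.eval_piLp j) (fun k ↦ hDu k j) (fun k ↦ hw k i) (fun k ↦ hw k j))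

/-- Lemma 2.2: the time averages of the two-point correlation tensor are bounded and continuous
in `h`, and are `C²` in `h` if the field is in `H¹₀(D)` (extended by zero, so in `H¹(ℝ³)`) with
square-integrable expectation of the `H¹` norm. -/
theorem correlation_tensor_regularity
    (D : Set V3) (hD : IsOpen D) (hDbdd : Bornology.IsBounded D)
    (ψ : V3 → ℝ) (hψ : ContDiff ℝ (⊤ : ℕ∞) ψ) (hψc : HasCompactSupport ψ) (hψD : tsupport ψ ⊆ D)
    (Ω : Type) [MeasurableSpace Ω] (μ : Measure Ω) (hμ : IsProbabilityMeasure μ)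
    (T : ℝ) (hT : 0 < T)
    (u : Ω → ℝ → V3 → V3)
    (humeas : Measurable (fun q : Ω × ℝ × V3 => u q.1 q.2.1 q.2.2))
    (huD : ∀ ω t x, x ∉ D → u ω t x = 0)
    (huL2 : (∫⁻ ω, (∫⁻ t in Set.Ioc 0 T, ∫⁻ x in D, (‖u ω t x‖₊ : ℝ≥0∞) ^ 2) ∂μ) < ⊤) :
    (∀ i j : Fin 3,
      Continuous (fun h : V3 => (1 / T) * ∫ t in (0 : ℝ)..T, Gam μ D ψ u i j t h) ∧
      ∃ M : ℝ, ∀ h : V3, |(1 / T) * ∫ t in (0 : ℝ)..T, Gam μ D ψ u i j t h| ≤ M) ∧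
    ((∃ Du : Ω → ℝ → V3 → Fin 3 → Fin 3 → ℝ,
        Measurable (fun q : Ω × ℝ × V3 => Du q.1 q.2.1 q.2.2) ∧
        (∀ᵐ ω ∂μ, ∀ᵐ t ∂(volume.restrict (Set.Ioc 0 T)),
          ∀ φ : V3 → ℝ, ContDiff ℝ (⊤ : ℕ∞) φ → HasCompactSupport φ → ∀ i j : Fin 3,
            ∫ x : V3, u ω t x j * pd i φ x = -∫ x : V3, Du ω t x i j * φ x) ∧
        (∫⁻ ω, (∫⁻ t in Set.Ioc 0 T, ∫⁻ x : V3,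
            ((‖u ω t x‖₊ : ℝ≥0∞) ^ 2 +
              ∑ i : Fin 3, ∑ j : Fin 3, (‖Du ω t x i j‖₊ : ℝ≥0∞) ^ 2)) ∂μ) < ⊤) →
      ∀ i j : Fin 3,
        ContDiff ℝ 2 (fun h : V3 => (1 / T) * ∫ t in (0 : ℝ)..T, Gam μ D ψ u i j t h)) := by
  obtain ⟨C, hC⟩ := hψc.exists_bound_of_continuous hψ.continuous
  obtain ⟨C', hC'⟩ := (hψc.fderiv ℝ).exists_bound_of_continuous (hψ.continuous_fderiv (by simp))
  exact correlation_tensor_regularity_general D ψ hψ hC hC' μ T hT u humeas huD huL2
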